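/- Let u be a Schwartz function on ℝ³ and 0 < s ≤ 1/2. For every m ∈ ℝ there is a constant C > 0 depending on m and s such that ‖[(1-Δ)^s, ⟨·⟩^m] u‖_{L²(ℝ³)} ≤ C ‖⟨·⟩^m u‖_{L²(ℝ³)}. -/

import Mathlib

open MeasureTheory Real
open scoped FourierTransform SchwartzMap
noncomputable section
abbrev V := EuclideanSpace ℝ (Fin 3)
/-- Japanese bracket `⟨v⟩ = (1+|v|²)^{1/2}`. -/
def jb (v : V) : ℝ := (1 + ‖v‖^2) ^ ((1:ℝ)/2)
/-- `L²` norm. -/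
def l2norm (f : V → ℂ) : ℝ := (∫ v, ‖f v‖^2) ^ ((1:ℝ)/2)
/-- Sobolev `H^k` norm defined via the Fourier transform. -/
def Hnorm (k : ℝ) (f : V → ℂ) : ℝ := (∫ ξ, (jb ξ)^(2*k) * ‖𝓕 f ξ‖^2) ^ ((1:ℝ)/2)
/-- Weighted Sobolev norm `‖u‖_{H^k_l} = ‖⟨·⟩^l u‖_{H^k}`. -/
def HnormW (k l : ℝ) (f : V → ℂ) : ℝ := Hnorm k (fun v => ((jb v ^ l : ℝ) : ℂ) * f v)
/-- The Fourier multiplier `(1-Δ)^{r/2} = ⟨D⟩^r` with symbol `(1+|ξ|²)^{r/2}`. -/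
def besselOp (r : ℝ) (f : V → ℂ) : V → ℂ :=
  fun v => 𝓕⁻ (fun ξ => (((1 + ‖ξ‖^2) ^ (r/2) : ℝ) : ℂ) * 𝓕 f ξ) v

/-!
For `0 < s < 1` the power `a ^ s` is, up to the constant `bernsteinConst s`, the integral of
`t ^ (-s - 1) * (1 - exp (-a t))` over `t > 0`, so that the commutator of `(1 - Δ) ^ s` with a
weight `w` is a superposition of its commutators with the semigroup `exp (-t (1 - Δ))`. The
semigroup averages over translates by `√t z` against a Gaussian. Expand `w` to first order along
each translation. Integration by parts against the Gaussian turns the first-order term into `t`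
times the semigroup applied to `div (u ∇w)`, and integrating in `t` gives a multiple of
`(1 - Δ) ^ (s - 1) div (u ∇w)`; since `|∇w| ≲ |w|`, this is bounded by `w u` in `L²` as soon as
the symbol `⟨ξ⟩ ^ (2 * s - 2) * |ξ|` is bounded, that is for `s ≤ 1 / 2`. The second-order
remainder gains a factor `t`, which turns `t ^ (-s - 1)` into `t ^ (-s)`, integrable at zero, and
it is dominated pointwise by an average of translates of `|w u|` against a finite measure, so
Minkowski's inequality bounds it in `L²`.
-/

open Module LineDeriv Set Filter Asymptotics
open scoped NNReal ENNReal

lemma norm_image_one_sub_sub_deriv_le {G : Type*} [NormedAddCommGroup G] [NormedSpace ℝ G]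
    {g g' g'' : ℝ → G} {C : ℝ} (hg : ∀ τ, HasDerivAt g (g' τ) τ)
    (hg' : ∀ τ, HasDerivAt g' (g'' τ) τ) (hC : ∀ τ ∈ Icc (0 : ℝ) 1, ‖g'' τ‖ ≤ C) :
    ‖g 1 - g 0 - g' 0‖ ≤ C := by
  have hC₀ : 0 ≤ C := (norm_nonneg _).trans (hC 0 (by simp))
  have h_slope : ∀ τ ∈ Icc (0 : ℝ) 1, ‖g' τ - g' 0‖ ≤ C := fun τ hτ ↦ by
    refine (norm_image_sub_le_of_norm_deriv_le_segment' (fun σ _ ↦ (hg' σ).hasDerivWithinAt)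
      (fun σ hσ ↦ hC σ ⟨hσ.1, hσ.2.le⟩) τ hτ).trans ?_
    nlinarith [hτ.1, hτ.2]
  have h_mean := norm_image_sub_le_of_norm_deriv_le_segment' (f := fun τ ↦ g τ - τ • g' 0)
    (fun σ _ ↦ ((hg σ).sub ((hasDerivAt_id σ).smul_const (g' 0))).hasDerivWithinAt)
    (fun σ hσ ↦ by simpa using h_slope σ ⟨hσ.1, hσ.2.le⟩) 1 (by simp)
  simpa [sub_right_comm] using h_mean

section Bracket

variable {E : Type*} [NormedAddCommGroup E]

/-- The power `⟨x⟩ ^ (2 * r) = (1 + ‖x‖ ^ 2) ^ r` of the Japanese bracket. It plays the role of the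
weight and, on the Fourier side, of the symbol of `(1 - Δ) ^ r`. -/
def bracketPow (r : ℝ) (x : E) : ℝ := (1 + ‖x‖ ^ 2) ^ r

lemma bracketPow_pos (r : ℝ) (x : E) : 0 < bracketPow r x := by
  unfold bracketPow
  positivity

lemma bracketPow_le_one_add_norm_sq_pow (r : ℝ) (x : E) :
    bracketPow r x ≤ (1 + ‖x‖ ^ 2) ^ ⌈r⌉₊ := by
  rw [bracketPow, ← rpow_natCast _ ⌈r⌉₊]
  exact rpow_le_rpow_of_exponent_le (le_add_of_nonneg_right (sq_nonneg _)) (Nat.le_ceil r)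

lemma one_add_norm_add_sq_le (x h : E) :
    1 + ‖x + h‖ ^ 2 ≤ 2 * (1 + ‖h‖ ^ 2) * (1 + ‖x‖ ^ 2) := by
  nlinarith [pow_le_pow_left₀ (norm_nonneg _) (norm_add_le x h) 2, sq_nonneg (‖x‖ - ‖h‖),
    mul_nonneg (sq_nonneg ‖x‖) (sq_nonneg ‖h‖)]

lemma bracketPow_add_le (r : ℝ) (x h : E) :
    bracketPow r (x + h) ≤ 2 ^ |r| * bracketPow |r| h * bracketPow r x := by
  rw [bracketPow, bracketPow, bracketPow, ← mul_rpow (by positivity) (by positivity)]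
  rcases le_total 0 r with hr | hr
  · rw [abs_of_nonneg hr, ← mul_rpow (by positivity) (by positivity)]
    exact rpow_le_rpow (by positivity) (one_add_norm_add_sq_le x h) hr
  · have h_swap : 1 + ‖x‖ ^ 2 ≤ 2 * (1 + ‖h‖ ^ 2) * (1 + ‖x + h‖ ^ 2) := by
      simpa using one_add_norm_add_sq_le (x + h) (-h)
    rw [abs_of_nonpos hr, rpow_neg (by positivity), ← inv_rpow (by positivity),
      ← mul_rpow (by positivity) (by positivity), inv_mul_eq_div]
    exact rpow_le_rpow_of_nonpos (by positivity) ((div_le_iff₀' (by positivity)).2 h_swap) hr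

lemma bracketPow_sub_one_mul (r : ℝ) (x : E) :
    bracketPow (r - 1) x * (1 + ‖x‖ ^ 2) = bracketPow r x := by
  rw [bracketPow, bracketPow, ← rpow_add_one (by positivity), sub_add_cancel]

variable [InnerProductSpace ℝ E]

@[fun_prop]
lemma hasTemperateGrowth_bracketPow (r : ℝ) :
    (bracketPow r : E → ℝ).HasTemperateGrowth := by
  unfold bracketPow
  fun_prop

lemma abs_inner_le_norm_mul_one_add_norm_sq (x e : E) : |inner ℝ x e| ≤ ‖e‖ * (1 + ‖x‖ ^ 2) :=
  (abs_real_inner_le_norm x e).trans (by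
    nlinarith [mul_nonneg (norm_nonneg e) (sq_nonneg (‖x‖ - 1)),
      mul_nonneg (norm_nonneg e) (sq_nonneg (‖x‖)), norm_nonneg e])

lemma abs_inner_mul_bracketPow_le {s : ℝ} (hs : s ≤ 1 / 2) (ξ e : E) :
    |inner ℝ ξ e| * bracketPow (s - 1) ξ ≤ ‖e‖ := by
  have h_one : 1 ≤ 1 + ‖ξ‖ ^ 2 := by nlinarith [sq_nonneg ‖ξ‖]
  have h_norm : ‖ξ‖ ≤ (1 + ‖ξ‖ ^ 2) ^ (1 / 2 : ℝ) := by
    rw [← Real.sqrt_eq_rpow]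
    exact Real.le_sqrt_of_sq_le (by linarith)
  calc |inner ℝ ξ e| * bracketPow (s - 1) ξ
      ≤ (1 + ‖ξ‖ ^ 2) ^ (1 / 2 : ℝ) * ‖e‖ * (1 + ‖ξ‖ ^ 2) ^ (-(1 / 2) : ℝ) := by
        unfold bracketPow
        gcongr
        · exact (abs_real_inner_le_norm ξ e).trans (by gcongr)
        · linarith
    _ = ‖e‖ := by
        rw [mul_right_comm, ← rpow_add (by positivity), add_neg_cancel, rpow_zero, one_mul]

lemma hasFDerivAt_bracketPow (r : ℝ) (x : E) :
    HasFDerivAt (bracketPow r) ((2 * r * bracketPow (r - 1) x) • innerSL ℝ x) x := by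
  unfold bracketPow
  refine (((hasStrictFDerivAt_norm_sq x).hasFDerivAt.const_add 1).rpow_const
    (Or.inl (by positivity))).congr_fderiv ?_
  ext v
  simp only [smul_apply, innerSL_apply_apply, smul_eq_mul]
  ring

lemma abs_fderiv_bracketPow_apply_le (r : ℝ) (x e : E) :
    |fderiv ℝ (bracketPow r) x e| ≤ 2 * |r| * ‖e‖ * bracketPow r x := by
  have h_pos := bracketPow_pos (r - 1) x
  rw [(hasFDerivAt_bracketPow r x).fderiv, smul_apply, innerSL_apply_apply,
    smul_eq_mul, abs_mul, abs_mul, abs_mul, abs_two, abs_of_pos h_pos, ← bracketPow_sub_one_mul r]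
  calc 2 * |r| * bracketPow (r - 1) x * |inner ℝ x e|
      ≤ 2 * |r| * bracketPow (r - 1) x * (‖e‖ * (1 + ‖x‖ ^ 2)) := by
        gcongr
        exact abs_inner_le_norm_mul_one_add_norm_sq x e
    _ = _ := by ring

lemma hasDerivAt_bracketPow_line (r : ℝ) (x h : E) (τ : ℝ) :
    HasDerivAt (fun τ : ℝ ↦ bracketPow r (x + τ • h))
      (2 * r * bracketPow (r - 1) (x + τ • h) * inner ℝ (x + τ • h) h) τ := by
  have h_line : HasDerivAt (fun τ : ℝ ↦ x + τ • h) h τ := by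
    simpa using ((hasDerivAt_id τ).smul_const h).const_add x
  exact (hasFDerivAt_bracketPow r (x + τ • h)).comp_hasDerivAt τ h_line

lemma hasDerivAt_deriv_bracketPow_line (r : ℝ) (x h : E) (τ : ℝ) :
    HasDerivAt (fun τ : ℝ ↦ 2 * r * bracketPow (r - 1) (x + τ • h) * inner ℝ (x + τ • h) h)
      (2 * r * (2 * (r - 1) * bracketPow (r - 2) (x + τ • h) * inner ℝ (x + τ • h) h ^ 2 +
        bracketPow (r - 1) (x + τ • h) * ‖h‖ ^ 2)) τ := by
  have h_line : HasDerivAt (fun τ : ℝ ↦ x + τ • h) h τ := by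
    simpa using ((hasDerivAt_id τ).smul_const h).const_add x
  have h_inner := h_line.inner ℝ (hasDerivAt_const τ h)
  convert! (((hasDerivAt_bracketPow_line (r - 1) x h τ).const_mul (2 * r)).mul h_inner) using 1
  rw [inner_zero_right, zero_add, real_inner_self_eq_norm_sq, sub_sub, one_add_one_eq_two]
  ring

lemma abs_deriv_deriv_bracketPow_le (r : ℝ) (x h : E) :
    |2 * r * (2 * (r - 1) * bracketPow (r - 2) x * inner ℝ x h ^ 2 +
        bracketPow (r - 1) x * ‖h‖ ^ 2)| ≤
      2 * |r| * (2 * |r - 1| + 1) * ‖h‖ ^ 2 * bracketPow r x := by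
  have h_inner : inner ℝ x h ^ 2 ≤ ‖h‖ ^ 2 * (1 + ‖x‖ ^ 2) := by
    rw [← sq_abs]
    nlinarith [pow_le_pow_left₀ (abs_nonneg _) (abs_real_inner_le_norm x h) 2, sq_nonneg ‖h‖]
  have h_low : bracketPow (r - 1) x ≤ bracketPow r x := by
    rw [← bracketPow_sub_one_mul r]
    exact le_mul_of_one_le_right (bracketPow_pos _ x).le (by nlinarith [sq_nonneg ‖x‖])
  have h_two : bracketPow (r - 2) x * (1 + ‖x‖ ^ 2) = bracketPow (r - 1) x := by
    rw [← bracketPow_sub_one_mul (r - 1), sub_sub, one_add_one_eq_two]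
  have h_first : bracketPow (r - 2) x * inner ℝ x h ^ 2 ≤ ‖h‖ ^ 2 * bracketPow r x :=
    calc bracketPow (r - 2) x * inner ℝ x h ^ 2
        ≤ bracketPow (r - 2) x * (‖h‖ ^ 2 * (1 + ‖x‖ ^ 2)) :=
          mul_le_mul_of_nonneg_left h_inner (bracketPow_pos _ x).le
      _ = ‖h‖ ^ 2 * bracketPow (r - 1) x := by rw [← h_two]; ring
      _ ≤ ‖h‖ ^ 2 * bracketPow r x := mul_le_mul_of_nonneg_left h_low (sq_nonneg _)
  have h_pos₁ := bracketPow_pos (r - 1) x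
  have h_pos₂ := bracketPow_pos (r - 2) x
  rw [abs_mul, abs_mul, abs_two]
  calc 2 * |r| * |2 * (r - 1) * bracketPow (r - 2) x * inner ℝ x h ^ 2 +
          bracketPow (r - 1) x * ‖h‖ ^ 2|
      ≤ 2 * |r| * (2 * |r - 1| * (bracketPow (r - 2) x * inner ℝ x h ^ 2) +
          bracketPow (r - 1) x * ‖h‖ ^ 2) := by
        gcongr
        refine (abs_add_le _ _).trans_eq ?_
        rw [abs_mul, abs_mul, abs_mul, abs_mul, abs_two, abs_of_pos h_pos₁, abs_of_pos h_pos₂,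
          abs_sq, abs_sq, mul_assoc (2 * |r - 1|)]
    _ ≤ 2 * |r| * (2 * |r - 1| * (‖h‖ ^ 2 * bracketPow r x) + bracketPow r x * ‖h‖ ^ 2) := by
        gcongr
    _ = _ := by ring

lemma bracketPow_smul_le {r : ℝ} (hr : 0 ≤ r) {τ : ℝ} (hτ : τ ∈ Icc (0 : ℝ) 1) (h : E) :
    bracketPow r (τ • h) ≤ bracketPow r h := by
  refine rpow_le_rpow (by positivity) ?_ hr
  gcongr
  rw [norm_smul, Real.norm_of_nonneg hτ.1]
  exact mul_le_of_le_one_left (norm_nonneg h) hτ.2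

lemma abs_bracketPow_add_sub_sub_fderiv_le (r : ℝ) (x h : E) :
    |bracketPow r (x + h) - bracketPow r x - fderiv ℝ (bracketPow r) x h| ≤
      2 * |r| * (2 * |r - 1| + 1) * 2 ^ |r| * (‖h‖ ^ 2 * bracketPow |r| h * bracketPow r x) := by
  have h_taylor := norm_image_one_sub_sub_deriv_le (hasDerivAt_bracketPow_line r x h)
    (hasDerivAt_deriv_bracketPow_line r x h) (C := 2 * |r| * (2 * |r - 1| + 1) * ‖h‖ ^ 2 *
      (2 ^ |r| * bracketPow |r| h * bracketPow r x)) fun τ hτ ↦ by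
    refine (abs_deriv_deriv_bracketPow_le r (x + τ • h) h).trans ?_
    have h_scale := bracketPow_smul_le (abs_nonneg r) hτ h
    have h_pos := bracketPow_pos r x
    gcongr
    exact (bracketPow_add_le r x (τ • h)).trans (by gcongr)
  rw [(hasFDerivAt_bracketPow r x).fderiv, smul_apply, innerSL_apply_apply, smul_eq_mul]
  simp only [one_smul, zero_smul, add_zero, Real.norm_eq_abs] at h_taylor
  exact h_taylor.trans_eq (by ring)

end Bracket

section HeatKernel

variable {E : Type*} [NormedAddCommGroup E] [InnerProductSpace ℝ E]

/-- The heat kernel at time one, in the normalisation in which the heat semigroup at time `t` is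
the Fourier multiplier with symbol `exp (-t ‖ξ‖ ^ 2)`. -/
def heatKernel (z : E) : ℝ := π ^ ((finrank ℝ E : ℝ) / 2) * rexp (-π ^ 2 * ‖z‖ ^ 2)

lemma heatKernel_nonneg (z : E) : 0 ≤ heatKernel z := by
  unfold heatKernel
  positivity

@[fun_prop]
lemma continuous_heatKernel : Continuous (heatKernel : E → ℝ) := by
  unfold heatKernel
  fun_prop

lemma hasFDerivAt_heatKernel (z : E) :
    HasFDerivAt heatKernel ((-2 * π ^ 2 * heatKernel z) • innerSL ℝ z) z := by
  unfold heatKernel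
  refine (((hasStrictFDerivAt_norm_sq z).hasFDerivAt.const_mul (-π ^ 2)).exp.const_mul
    (π ^ ((finrank ℝ E : ℝ) / 2))).congr_fderiv ?_
  ext v
  simp only [smul_smul, smul_apply, innerSL_apply_apply, smul_eq_mul]
  ring

variable [FiniteDimensional ℝ E] [MeasurableSpace E] [BorelSpace E]

lemma integrable_exp_neg_mul_norm_sq {b : ℝ} (hb : 0 < b) :
    Integrable fun z : E ↦ rexp (-b * ‖z‖ ^ 2) := by
  refine (GaussianFourier.integrable_cexp_neg_mul_sq_norm_add (b := b) (by simpa) 0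
    (0 : E)).norm.congr (.of_forall fun z ↦ ?_)
  simp [Complex.norm_exp, ← Complex.ofReal_pow]

lemma integrable_heatKernel_mul_one_add_norm_sq_pow (N : ℕ) :
    Integrable fun z : E ↦ heatKernel z * (1 + ‖z‖ ^ 2) ^ N := by
  refine ((integrable_exp_neg_mul_norm_sq (E := E) one_pos).const_mul
    (π ^ ((finrank ℝ E : ℝ) / 2) * (N.factorial * rexp 1))).mono' (by fun_prop)
    (.of_forall fun z ↦ ?_)
  rw [Real.norm_of_nonneg (mul_nonneg (heatKernel_nonneg z) (by positivity)), heatKernel]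
  have h_pow : (1 + ‖z‖ ^ 2) ^ N ≤ N.factorial * rexp (1 + ‖z‖ ^ 2) := by
    rw [mul_comm, ← div_le_iff₀ (by positivity)]
    exact Real.pow_div_factorial_le_exp _ (by positivity) N
  have h_exp : rexp (-π ^ 2 * ‖z‖ ^ 2) * rexp (1 + ‖z‖ ^ 2) ≤ rexp 1 * rexp (-1 * ‖z‖ ^ 2) := by
    rw [← Real.exp_add, ← Real.exp_add, Real.exp_le_exp]
    nlinarith [mul_nonneg (sq_nonneg ‖z‖) (show 0 ≤ π ^ 2 - 2 by nlinarith [Real.pi_gt_three])]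
  calc π ^ ((finrank ℝ E : ℝ) / 2) * rexp (-π ^ 2 * ‖z‖ ^ 2) * (1 + ‖z‖ ^ 2) ^ N
      ≤ π ^ ((finrank ℝ E : ℝ) / 2) * rexp (-π ^ 2 * ‖z‖ ^ 2) *
          (N.factorial * rexp (1 + ‖z‖ ^ 2)) := by gcongr
    _ = π ^ ((finrank ℝ E : ℝ) / 2) * N.factorial *
          (rexp (-π ^ 2 * ‖z‖ ^ 2) * rexp (1 + ‖z‖ ^ 2)) := by ring
    _ ≤ π ^ ((finrank ℝ E : ℝ) / 2) * N.factorial * (rexp 1 * rexp (-1 * ‖z‖ ^ 2)) := by gcongr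
    _ = _ := by ring

lemma integrable_heatKernel : Integrable (heatKernel : E → ℝ) := by
  simpa using integrable_heatKernel_mul_one_add_norm_sq_pow (E := E) 0

lemma integrable_heatKernel_mul_inner (e : E) :
    Integrable fun z : E ↦ heatKernel z * inner ℝ z e := by
  refine ((integrable_heatKernel_mul_one_add_norm_sq_pow (E := E) 1).const_mul ‖e‖).mono'
    (by fun_prop) (.of_forall fun z ↦ ?_)
  rw [norm_mul, Real.norm_of_nonneg (heatKernel_nonneg z), Real.norm_eq_abs, pow_one]
  calc heatKernel z * |inner ℝ z e| ≤ heatKernel z * (‖e‖ * (1 + ‖z‖ ^ 2)) :=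
        mul_le_mul_of_nonneg_left (abs_inner_le_norm_mul_one_add_norm_sq z e) (heatKernel_nonneg z)
    _ = _ := mul_left_comm _ _ _

end HeatKernel

section BesselSemigroup

variable {E F : Type*} [NormedAddCommGroup E] [InnerProductSpace ℝ E] [FiniteDimensional ℝ E]
  [MeasurableSpace E] [BorelSpace E] [NormedAddCommGroup F] [NormedSpace ℂ F]

/-- The semigroup `exp (-t (1 - Δ))` on functions, as an average over scaled translates. -/
def besselSemigroup (t : ℝ) (φ : E → F) (x : E) : F :=
  rexp (-t) • ∫ z, heatKernel z • φ (x - √t • z)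

lemma fourier_modulated_gaussian {t : ℝ} (ht : 0 < t) (x y : E) :
    𝓕 (fun ξ : E ↦ Complex.exp (-t * ‖ξ‖ ^ 2 + 2 * π * Complex.I * inner ℝ x ξ)) y =
      ((√t ^ finrank ℝ E)⁻¹ * heatKernel ((√t)⁻¹ • (x - y)) : ℝ) := by
  have h_sqrt : √t ^ finrank ℝ E = t ^ ((finrank ℝ E : ℝ) / 2) := by
    rw [Real.sqrt_eq_rpow, ← Real.rpow_natCast, ← Real.rpow_mul ht.le, one_div_mul_eq_div]
  have h_norm : ‖(√t)⁻¹ • (x - y)‖ ^ 2 = ‖x - y‖ ^ 2 / t := by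
    rw [norm_smul, mul_pow, norm_inv, inv_pow, Real.norm_of_nonneg (Real.sqrt_nonneg t),
      Real.sq_sqrt ht.le, inv_mul_eq_div]
  rw [fourier_gaussian_innerProductSpace' (by simpa) x y, heatKernel, h_norm, h_sqrt, ← mul_assoc,
    inv_mul_eq_div, ← Real.div_rpow pi_pos.le ht.le, ← mul_div_assoc]
  push_cast [Complex.ofReal_cpow (div_nonneg pi_pos.le ht.le)]
  rfl

lemma fourierInv_gaussian_smul_fourier [CompleteSpace F] (φ : 𝓢(E, F)) {t : ℝ} (ht : 0 < t)
    (x : E) :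
    𝓕⁻ (fun ξ ↦ rexp (-t * ‖ξ‖ ^ 2) • 𝓕 φ ξ) x = ∫ z, heatKernel z • φ (x - √t • z) := by
  have h_parseval := VectorFourier.integral_fourierIntegral_smul_eq_flip (L := innerₗ E) (e := 𝐞)
    Real.continuous_fourierChar continuous_inner
    (GaussianFourier.integrable_cexp_neg_mul_sq_norm_add (b := t) (by simpa)
      (2 * π * Complex.I) x)
    (φ.integrable (μ := volume))
  calc 𝓕⁻ (fun ξ ↦ rexp (-t * ‖ξ‖ ^ 2) • 𝓕 φ ξ) x
      = ∫ ξ, Complex.exp (-t * ‖ξ‖ ^ 2 + 2 * π * Complex.I * inner ℝ x ξ) • 𝓕 φ ξ := by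
        rw [Real.fourierInv_eq']
        refine integral_congr_ae (.of_forall fun ξ ↦ ?_)
        simp only [← Complex.coe_smul, smul_smul, Complex.ofReal_exp, ← Complex.exp_add,
          real_inner_comm ξ x]
        push_cast
        ring_nf
    _ = ∫ y, ((√t ^ finrank ℝ E)⁻¹ * heatKernel ((√t)⁻¹ • (x - y))) • φ y := by
        rw [flip_innerₗ] at h_parseval
        refine h_parseval.symm.trans (integral_congr_ae (.of_forall fun y ↦ ?_))
        exact congrArg (· • φ y) (fourier_modulated_gaussian ht x y)
    _ = (√t ^ finrank ℝ E)⁻¹ • ∫ y, heatKernel ((√t)⁻¹ • y) • φ (x - √t • (√t)⁻¹ • y) := by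
        rw [← integral_sub_left_eq_self _ volume x, ← integral_smul]
        simp only [sub_sub_cancel, smul_smul, mul_inv_cancel₀ (Real.sqrt_pos.2 ht).ne', one_smul]
    _ = ∫ z, heatKernel z • φ (x - √t • z) := by
        rw [Measure.integral_comp_inv_smul_of_nonneg volume
          (fun z ↦ heatKernel z • φ (x - √t • z)) (Real.sqrt_nonneg t),
          inv_smul_smul₀ (pow_pos (Real.sqrt_pos.2 ht) _).ne']

lemma fourierInv_exp_smul_fourier [CompleteSpace F] (φ : 𝓢(E, F)) {t : ℝ} (ht : 0 < t) (x : E) :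
    𝓕⁻ (fun ξ ↦ rexp (-((1 + ‖ξ‖ ^ 2) * t)) • 𝓕 φ ξ) x = besselSemigroup t φ x := by
  rw [besselSemigroup, ← fourierInv_gaussian_smul_fourier φ ht, Real.fourierInv_eq',
    Real.fourierInv_eq', ← integral_smul]
  refine integral_congr_ae (.of_forall fun ξ ↦ ?_)
  simp only
  rw [smul_comm (rexp (-t)), smul_smul, ← Real.exp_add]
  ring_nf

end BesselSemigroup

section PowerIntegrals

/-- The normalising constant in `bernsteinConst s * a ^ s = ∫ t ^ (-s - 1) * (1 - exp (-a t))`,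
the representation of the power `a ^ s` as a Bernstein function. -/
def bernsteinConst (s : ℝ) : ℝ := ∫ t in Ioi (0 : ℝ), t ^ (-s - 1) * (1 - rexp (-t))

lemma rpow_mul_one_sub_exp_neg_nonneg (p : ℝ) {t a : ℝ} (ht : 0 ≤ t) (ha : 0 ≤ a) :
    0 ≤ t ^ p * (1 - rexp (-(a * t))) :=
  mul_nonneg (rpow_nonneg ht p)
    (sub_nonneg.2 (Real.exp_le_one_iff.2 (neg_nonpos.2 (mul_nonneg ha ht))))

lemma integrableOn_rpow_mul_one_sub_exp_neg {s : ℝ} (hs₀ : 0 < s) (hs₁ : s < 1) :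
    IntegrableOn (fun t : ℝ ↦ t ^ (-s - 1) * (1 - rexp (-t))) (Ioi 0) := by
  have h_cont : Continuous fun t : ℝ ↦ 1 - rexp (-t) := by fun_prop
  refine mellin_convergent_of_isBigO_scalar (a := 0) (b := -1)
    (h_cont.locallyIntegrable.locallyIntegrableOn _) ?_ (by linarith) ?_ (by linarith)
  · refine IsBigO.of_bound 1 ((eventually_ge_atTop 0).mono fun t ht ↦ ?_)
    rw [Real.norm_of_nonneg (sub_nonneg.2 (Real.exp_le_one_iff.2 (neg_nonpos.2 ht))), neg_zero,
      rpow_zero, norm_one, one_mul]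
    linarith [Real.exp_pos (-t)]
  · refine IsBigO.of_bound 1 (eventually_mem_nhdsWithin.mono fun t (ht : 0 < t) ↦ ?_)
    rw [Real.norm_of_nonneg (sub_nonneg.2 (Real.exp_le_one_iff.2 (neg_nonpos.2 ht.le))), neg_neg,
      rpow_one, one_mul, Real.norm_of_nonneg ht.le]
    linarith [Real.add_one_le_exp (-t)]

lemma bernsteinConst_pos {s : ℝ} (hs₀ : 0 < s) (hs₁ : s < 1) : 0 < bernsteinConst s := by
  refine (setIntegral_pos_iff_support_of_nonneg_ae ?_
    (integrableOn_rpow_mul_one_sub_exp_neg hs₀ hs₁)).2 ?_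
  · filter_upwards [ae_restrict_mem measurableSet_Ioi] with t (ht : 0 < t)
    simpa using rpow_mul_one_sub_exp_neg_nonneg (-s - 1) ht.le zero_le_one
  · have h_support : Ioi (0 : ℝ) ⊆
        Function.support (fun t : ℝ ↦ t ^ (-s - 1) * (1 - rexp (-t))) ∩ Ioi 0 := by
      refine fun t (ht : 0 < t) ↦ ⟨mul_ne_zero (rpow_pos_of_pos ht _).ne' ?_, ht⟩
      exact (sub_pos.2 (Real.exp_lt_one_iff.2 (neg_lt_zero.2 ht))).ne'
    exact (by simp : 0 < volume (Ioi (0 : ℝ))).trans_le (measure_mono h_support)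

lemma rpow_mul_one_sub_exp_neg_mul (s : ℝ) {a t : ℝ} (ha : 0 < a) (ht : 0 < t) :
    t ^ (-s - 1) * (1 - rexp (-(a * t))) =
      a ^ (s + 1) * ((a * t) ^ (-s - 1) * (1 - rexp (-(a * t)))) := by
  rw [mul_rpow ha.le ht.le, ← mul_assoc, ← mul_assoc, ← rpow_add ha]
  simp

lemma integrableOn_rpow_mul_one_sub_exp_neg_mul {s a : ℝ} (hs₀ : 0 < s) (hs₁ : s < 1)
    (ha : 0 < a) :
    IntegrableOn (fun t : ℝ ↦ t ^ (-s - 1) * (1 - rexp (-(a * t)))) (Ioi 0) := by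
  have h_scaled := (integrableOn_Ioi_comp_mul_left_iff _ 0 ha).2
    ((mul_zero a).symm ▸ integrableOn_rpow_mul_one_sub_exp_neg hs₀ hs₁)
  exact IntegrableOn.congr_fun (h_scaled.const_mul (a ^ (s + 1)))
    (fun t ht ↦ (rpow_mul_one_sub_exp_neg_mul s ha ht).symm) measurableSet_Ioi

lemma integral_rpow_mul_one_sub_exp_neg_mul (s : ℝ) {a : ℝ} (ha : 0 < a) :
    ∫ t in Ioi (0 : ℝ), t ^ (-s - 1) * (1 - rexp (-(a * t))) = bernsteinConst s * a ^ s := by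
  rw [setIntegral_congr_fun measurableSet_Ioi fun t ht ↦ rpow_mul_one_sub_exp_neg_mul s ha ht,
    integral_const_mul, integral_comp_mul_left_Ioi (fun t ↦ t ^ (-s - 1) * (1 - rexp (-t))) 0 ha,
    mul_zero, smul_eq_mul, rpow_add_one ha.ne', bernsteinConst]
  field_simp

lemma integrableOn_rpow_neg_mul_exp_neg_mul {s a : ℝ} (hs : s < 1) (ha : 0 < a) :
    IntegrableOn (fun t : ℝ ↦ t ^ (-s) * rexp (-(a * t))) (Ioi 0) := by
  simpa using integrableOn_rpow_mul_exp_neg_mul_rpow (neg_lt_neg hs) one_pos ha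

lemma integral_rpow_neg_mul_exp_neg_mul {s a : ℝ} (hs : s < 1) (ha : 0 < a) :
    ∫ t in Ioi (0 : ℝ), t ^ (-s) * rexp (-(a * t)) = Real.Gamma (1 - s) * a ^ (s - 1) := by
  rw [← neg_sub 1 s, rpow_neg ha.le, ← inv_rpow ha.le, mul_comm, ← one_div,
    ← integral_rpow_mul_exp_neg_mul_Ioi (sub_pos.2 hs) ha]
  simp

lemma integrableOn_rpow_neg_mul_exp_neg_mul_one_add_pow {s : ℝ} (hs : s < 1) (N : ℕ) :
    IntegrableOn (fun t : ℝ ↦ t ^ (-s) * rexp (-t) * (1 + t) ^ N) (Ioi 0) := by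
  refine ((integrableOn_rpow_neg_mul_exp_neg_mul hs one_half_pos).const_mul
    (2 ^ N * N.factorial * rexp (1 / 2))).mono' (by fun_prop) ?_
  filter_upwards [ae_restrict_mem measurableSet_Ioi] with t (ht : 0 < t)
  rw [Real.norm_of_nonneg (by positivity)]
  have h_pow : ((1 + t) / 2) ^ N ≤ N.factorial * rexp ((1 + t) / 2) := by
    rw [mul_comm, ← div_le_iff₀ (by positivity)]
    exact Real.pow_div_factorial_le_exp _ (by positivity) N
  have h_exp : rexp (-t) * rexp ((1 + t) / 2) = rexp (1 / 2) * rexp (-(1 / 2 * t)) := by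
    rw [← Real.exp_add, ← Real.exp_add]
    ring_nf
  calc t ^ (-s) * rexp (-t) * (1 + t) ^ N
      = t ^ (-s) * rexp (-t) * (2 ^ N * ((1 + t) / 2) ^ N) := by
        rw [← mul_pow, mul_div_cancel₀ _ two_ne_zero]
    _ ≤ t ^ (-s) * rexp (-t) * (2 ^ N * (N.factorial * rexp ((1 + t) / 2))) := by gcongr
    _ = t ^ (-s) * 2 ^ N * N.factorial * (rexp (-t) * rexp ((1 + t) / 2)) := by ring
    _ = _ := by rw [h_exp]; ring

end PowerIntegrals

section FourierSuperposition

variable {α E F : Type*} [MeasurableSpace α] [NormedAddCommGroup E] [InnerProductSpace ℝ E]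
  [MeasurableSpace E] [BorelSpace E] [FiniteDimensional ℝ E] [NormedAddCommGroup F]
  [NormedSpace ℂ F] {μ : Measure α} [SFinite μ] {k : α → E → ℝ} {ψ : E → F}

lemma integrable_fourierInv_superposition_prod (hk : Measurable k.uncurry)
    (hk₀ : ∀ᵐ t ∂μ, ∀ ξ, 0 ≤ k t ξ) (hk_int : ∀ ξ, Integrable (k · ξ) μ)
    (hψ : AEStronglyMeasurable ψ) (hkψ : Integrable fun ξ ↦ (∫ t, k t ξ ∂μ) • ψ ξ) (x : E) :
    Integrable (fun p : E × α ↦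
      Complex.exp (↑(2 * π * inner ℝ p.1 x) * Complex.I) • k p.2 p.1 • ψ p.1) (volume.prod μ) := by
  have h_meas : AEStronglyMeasurable (fun p : E × α ↦ k p.2 p.1 • ψ p.1) (volume.prod μ) :=
    (hk.comp measurable_swap).aestronglyMeasurable.smul hψ.comp_fst
  have h_int : Integrable (fun p : E × α ↦ k p.2 p.1 • ψ p.1) (volume.prod μ) := by
    refine (integrable_prod_iff h_meas).2 ⟨.of_forall fun ξ ↦ (hk_int ξ).smul_const (ψ ξ), ?_⟩
    refine hkψ.norm.congr (.of_forall fun ξ ↦ ?_)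
    have h_norm : ∫ t, ‖k t ξ • ψ ξ‖ ∂μ = ∫ t, k t ξ * ‖ψ ξ‖ ∂μ :=
      integral_congr_ae (hk₀.mono fun t ht ↦ by simp only [norm_smul, Real.norm_of_nonneg (ht ξ)])
    beta_reduce
    rw [h_norm, integral_mul_const, norm_smul,
      Real.norm_of_nonneg (integral_nonneg_of_ae (hk₀.mono fun t ht ↦ ht ξ))]
  exact h_int.bdd_smul 1 (by fun_prop) (.of_forall fun p ↦ (Complex.norm_exp_ofReal_mul_I _).le)

end FourierSuperposition

section BesselPower

variable {E F : Type*} [NormedAddCommGroup E] [InnerProductSpace ℝ E] [FiniteDimensional ℝ E]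
  [MeasurableSpace E] [BorelSpace E] [NormedAddCommGroup F] [NormedSpace ℂ F]

/-- The operator `(1 - Δ) ^ r` on Schwartz functions, whose symbol in the frequency `ξ` of Mathlib's
Fourier transform is `(1 + ‖ξ‖ ^ 2) ^ r`, without factors `2 * π`. -/
def besselPower (r : ℝ) : 𝓢(E, F) →L[ℝ] 𝓢(E, F) :=
  SchwartzMap.fourierMultiplierCLM F (bracketPow r : E → ℝ)

lemma besselPower_apply (r : ℝ) (φ : 𝓢(E, F)) (x : E) :
    besselPower r φ x = 𝓕⁻ (fun ξ ↦ bracketPow r ξ • 𝓕 φ ξ) x := by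
  rw [besselPower, SchwartzMap.fourierMultiplierCLM_apply, SchwartzMap.fourierInv_coe,
    SchwartzMap.smulLeftCLM_apply (hasTemperateGrowth_bracketPow r)]

lemma integrable_bracketPow_smul (r : ℝ) (φ : 𝓢(E, F)) :
    Integrable fun ξ ↦ bracketPow r ξ • φ ξ := by
  simpa only [SchwartzMap.smulLeftCLM_apply (F := F) (hasTemperateGrowth_bracketPow (E := E) r)]
    using (SchwartzMap.smulLeftCLM F (bracketPow r : E → ℝ) φ).integrable

lemma fourierInv_mul_smul (c : ℝ) (g : E → ℝ) (ψ : E → F) (x : E) :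
    𝓕⁻ (fun ξ ↦ (c * g ξ) • ψ ξ) x = c • 𝓕⁻ (fun ξ ↦ g ξ • ψ ξ) x := by
  simp only [Real.fourierInv_eq', ← integral_smul, mul_smul, smul_comm _ c]

variable [CompleteSpace F]

lemma fourierInv_one_sub_exp_smul_fourier (φ : 𝓢(E, F)) {t : ℝ} (ht : 0 < t) (x : E) :
    𝓕⁻ (fun ξ ↦ (1 - rexp (-((1 + ‖ξ‖ ^ 2) * t))) • 𝓕 φ ξ) x = φ x - besselSemigroup t φ x := by
  have h_char : Integrable fun ξ ↦
      Complex.exp (↑(2 * π * inner ℝ ξ x) * Complex.I) • 𝓕 φ ξ :=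
    (𝓕 φ).integrable.bdd_smul 1 (by fun_prop)
      (.of_forall fun ξ ↦ (Complex.norm_exp_ofReal_mul_I _).le)
  have h_damped : Integrable fun ξ ↦ rexp (-((1 + ‖ξ‖ ^ 2) * t)) •
      Complex.exp (↑(2 * π * inner ℝ ξ x) * Complex.I) • 𝓕 φ ξ :=
    h_char.bdd_smul (φ := fun ξ : E ↦ rexp (-((1 + ‖ξ‖ ^ 2) * t))) 1 (by fun_prop)
      (.of_forall fun ξ ↦ by
        rw [Real.norm_of_nonneg (Real.exp_pos _).le]
        exact Real.exp_le_one_iff.2 (neg_nonpos.2 (by positivity)))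
  have h_inv : 𝓕⁻ (𝓕 φ) x = φ x := by rw [FourierTransform.fourierInv_fourier_eq]
  rw [← h_inv, SchwartzMap.fourierInv_coe, ← fourierInv_exp_smul_fourier φ ht]
  simp only [Real.fourierInv_eq', smul_comm _ (rexp _)]
  rw [← integral_sub h_char h_damped]
  simp only [sub_smul, one_smul, smul_sub, smul_comm _ (rexp _)]

lemma integral_fourierInv_eq_smul_besselPower {α : Type*} [MeasurableSpace α] {μ : Measure α}
    [SFinite μ] {k : α → E → ℝ} {c r : ℝ} (hk : Measurable k.uncurry)
    (hk₀ : ∀ᵐ t ∂μ, ∀ ξ, 0 ≤ k t ξ) (hk_int : ∀ ξ, Integrable (k · ξ) μ)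
    (hk_eq : ∀ ξ, ∫ t, k t ξ ∂μ = c * bracketPow r ξ) (φ : 𝓢(E, F)) (x : E) :
    Integrable (fun t ↦ 𝓕⁻ (fun ξ ↦ k t ξ • 𝓕 φ ξ) x) μ ∧
      ∫ t, 𝓕⁻ (fun ξ ↦ k t ξ • 𝓕 φ ξ) x ∂μ = c • besselPower r φ x := by
  have h_symbol : Integrable fun ξ ↦ (∫ t, k t ξ ∂μ) • 𝓕 φ ξ := by
    simp only [hk_eq, mul_smul]
    exact (integrable_bracketPow_smul r (𝓕 φ)).smul c
  have h_prod := integrable_fourierInv_superposition_prod hk hk₀ hk_int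
    (𝓕 φ).continuous.aestronglyMeasurable h_symbol x
  rw [besselPower_apply, ← fourierInv_mul_smul]
  simp only [← hk_eq, Real.fourierInv_eq']
  refine ⟨h_prod.integral_prod_right, ?_⟩
  rw [← integral_integral_swap h_prod]
  simp only [integral_smul, integral_smul_const]

lemma integral_rpow_smul_sub_besselSemigroup {s : ℝ} (hs₀ : 0 < s) (hs₁ : s < 1)
    (φ : 𝓢(E, F)) (x : E) :
    IntegrableOn (fun t : ℝ ↦ t ^ (-s - 1) • (φ x - besselSemigroup t φ x)) (Ioi 0) ∧
      ∫ t in Ioi (0 : ℝ), t ^ (-s - 1) • (φ x - besselSemigroup t φ x) =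
        bernsteinConst s • besselPower s φ x := by
  have h_pos : ∀ ξ : E, 0 < 1 + ‖ξ‖ ^ 2 := fun ξ ↦ by positivity
  have h_slice : EqOn
      (fun t : ℝ ↦ 𝓕⁻ (fun ξ ↦ (t ^ (-s - 1) * (1 - rexp (-((1 + ‖ξ‖ ^ 2) * t)))) • 𝓕 φ ξ) x)
      (fun t ↦ t ^ (-s - 1) • (φ x - besselSemigroup t φ x)) (Ioi 0) := fun t (ht : 0 < t) ↦ by
    simp only [fourierInv_mul_smul, fourierInv_one_sub_exp_smul_fourier φ ht]
  rw [← integrableOn_congr_fun h_slice measurableSet_Ioi,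
    ← setIntegral_congr_fun measurableSet_Ioi h_slice]
  refine integral_fourierInv_eq_smul_besselPower (by unfold Function.uncurry; fun_prop) ?_
    (fun ξ ↦ integrableOn_rpow_mul_one_sub_exp_neg_mul hs₀ hs₁ (h_pos ξ))
    (fun ξ ↦ integral_rpow_mul_one_sub_exp_neg_mul s (h_pos ξ)) φ x
  filter_upwards [ae_restrict_mem measurableSet_Ioi] with t (ht : 0 < t) ξ
  exact rpow_mul_one_sub_exp_neg_nonneg _ ht.le (h_pos ξ).le

lemma integral_rpow_smul_besselSemigroup {s : ℝ} (hs : s < 1) (φ : 𝓢(E, F)) (x : E) :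
    IntegrableOn (fun t : ℝ ↦ t ^ (-s) • besselSemigroup t φ x) (Ioi 0) ∧
      ∫ t in Ioi (0 : ℝ), t ^ (-s) • besselSemigroup t φ x =
        Real.Gamma (1 - s) • besselPower (s - 1) φ x := by
  have h_pos : ∀ ξ : E, 0 < 1 + ‖ξ‖ ^ 2 := fun ξ ↦ by positivity
  have h_slice : EqOn
      (fun t : ℝ ↦ 𝓕⁻ (fun ξ ↦ (t ^ (-s) * rexp (-((1 + ‖ξ‖ ^ 2) * t))) • 𝓕 φ ξ) x)
      (fun t ↦ t ^ (-s) • besselSemigroup t φ x) (Ioi 0) := fun t (ht : 0 < t) ↦ by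
    simp only [fourierInv_mul_smul, fourierInv_exp_smul_fourier φ ht]
  rw [← integrableOn_congr_fun h_slice measurableSet_Ioi,
    ← setIntegral_congr_fun measurableSet_Ioi h_slice]
  refine integral_fourierInv_eq_smul_besselPower (by unfold Function.uncurry; fun_prop) ?_
    (fun ξ ↦ integrableOn_rpow_neg_mul_exp_neg_mul hs (h_pos ξ))
    (fun ξ ↦ integral_rpow_neg_mul_exp_neg_mul hs (h_pos ξ)) φ x
  filter_upwards [ae_restrict_mem measurableSet_Ioi] with t (ht : 0 < t) ξ
  positivity

end BesselPower

section SemigroupCommutator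

variable {E F : Type*} [NormedAddCommGroup E]

lemma hasTemperateGrowth_fderiv_apply [NormedSpace ℝ E] {w : E → ℝ} (hw : w.HasTemperateGrowth)
    (e : E) : (fun y ↦ fderiv ℝ w y e).HasTemperateGrowth := by
  have h_fderiv : (fderiv ℝ w).HasTemperateGrowth := by
    refine ⟨hw.1.fderiv_right (by simp), fun n ↦ ?_⟩
    simpa only [norm_iteratedFDeriv_fderiv] using hw.2 (n + 1)
  exact (ContinuousLinearMap.apply ℝ ℝ e).hasTemperateGrowth.comp h_fderiv

/-- The error `w (y + h) - w y - Dw(y) h` of the first-order Taylor expansion of `w`. -/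
def taylorRemainder [NormedSpace ℝ E] (w : E → ℝ) (y h : E) : ℝ :=
  w (y + h) - w y - fderiv ℝ w y h

variable [InnerProductSpace ℝ E] [FiniteDimensional ℝ E] [MeasurableSpace E] [BorelSpace E]
  [NormedAddCommGroup F]

lemma integrable_smul_schwartz_comp_sub [NormedSpace ℝ F] {k : E → ℝ} (hk : Integrable k)
    (ψ : 𝓢(E, F)) (x : E) (τ : ℝ) : Integrable fun z ↦ k z • ψ (x - τ • z) :=
  hk.smul_bdd _ (by fun_prop) (.of_forall fun _ ↦ SchwartzMap.norm_le_seminorm ℝ ψ _)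

lemma integral_heatKernel_mul_inner_smul [NormedSpace ℝ F] (ψ : 𝓢(E, F)) (x e : E) (τ : ℝ) :
    ∫ z, (heatKernel z * inner ℝ z e) • ψ (x - τ • z) =
      (-(τ / (2 * π ^ 2))) • ∫ z, heatKernel z • (∂_{e} ψ) (x - τ • z) := by
  have h_fderiv_kernel (z : E) :
      fderiv ℝ heatKernel z e = -2 * π ^ 2 * (heatKernel z * inner ℝ z e) := by
    rw [(hasFDerivAt_heatKernel z).fderiv, smul_apply, innerSL_apply_apply, smul_eq_mul, mul_assoc]
  have h_hasFDerivAt (z : E) : HasFDerivAt (fun z ↦ ψ (x - τ • z))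
      ((fderiv ℝ ψ (x - τ • z)).comp (-(τ • ContinuousLinearMap.id ℝ E))) z :=
    (ψ.hasFDerivAt (x := x - τ • z)).comp z (((hasFDerivAt_id z).const_smul τ).const_sub x)
  have h_fderiv (z : E) : fderiv ℝ (fun z ↦ ψ (x - τ • z)) z e = -τ • (∂_{e} ψ) (x - τ • z) := by
    rw [(h_hasFDerivAt z).fderiv]
    simp [SchwartzMap.lineDerivOp_apply_eq_fderiv]
  have h_parts := integral_smul_fderiv_eq_neg_fderiv_smul_of_integrable (μ := volume) (v := e)
    (f := heatKernel) (g := fun z ↦ ψ (x - τ • z))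
    (by
      simp only [h_fderiv_kernel]
      exact integrable_smul_schwartz_comp_sub
        ((integrable_heatKernel_mul_inner e).const_mul _) ψ x τ)
    (by
      simp only [h_fderiv, smul_comm _ (-τ)]
      exact (integrable_smul_schwartz_comp_sub integrable_heatKernel (∂_{e} ψ) x τ).smul (-τ))
    (integrable_smul_schwartz_comp_sub integrable_heatKernel ψ x τ)
    (fun z _ ↦ (hasFDerivAt_heatKernel z).differentiableAt)
    (fun z _ ↦ (h_hasFDerivAt z).differentiableAt)
  simp only [h_fderiv, h_fderiv_kernel, mul_smul (-2 * π ^ 2), smul_comm _ (-τ), integral_smul]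
    at h_parts
  have h_pi : 2 * π ^ 2 ≠ 0 := by positivity
  calc ∫ z, (heatKernel z * inner ℝ z e) • ψ (x - τ • z)
      = (2 * π ^ 2)⁻¹ • -((-2 * π ^ 2) • ∫ z, (heatKernel z * inner ℝ z e) • ψ (x - τ • z)) := by
        rw [← neg_smul, neg_mul, neg_neg, inv_smul_smul₀ h_pi]
    _ = (2 * π ^ 2)⁻¹ • -τ • ∫ z, heatKernel z • (∂_{e} ψ) (x - τ • z) := by rw [h_parts]
    _ = _ := by module

variable [NormedSpace ℂ F]

/-- The Schwartz function `div (u ∇w)`, computed in an orthonormal basis. -/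
def divSmulGradient (w : E → ℝ) (u : 𝓢(E, F)) : 𝓢(E, F) :=
  ∑ j, ∂_{stdOrthonormalBasis ℝ E j}
    (SchwartzMap.smulLeftCLM F (fun y ↦ fderiv ℝ w y (stdOrthonormalBasis ℝ E j)) u)

lemma integral_heatKernel_smul_fderiv_smul {w : E → ℝ} (hw : w.HasTemperateGrowth) (u : 𝓢(E, F))
    (x : E) (τ : ℝ) :
    Integrable (fun z ↦ heatKernel z • fderiv ℝ w (x - τ • z) (τ • z) • u (x - τ • z)) ∧
    ∫ z, heatKernel z • fderiv ℝ w (x - τ • z) (τ • z) • u (x - τ • z) =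
      (-(τ ^ 2 / (2 * π ^ 2))) • ∫ z, heatKernel z • divSmulGradient w u (x - τ • z) := by
  set b := stdOrthonormalBasis ℝ E
  have h_expand (z : E) : heatKernel z • fderiv ℝ w (x - τ • z) (τ • z) • u (x - τ • z) =
      ∑ j, τ • (heatKernel z * inner ℝ z (b j)) •
        SchwartzMap.smulLeftCLM F (fun y ↦ fderiv ℝ w y (b j)) u (x - τ • z) := by
    have h_coord : fderiv ℝ w (x - τ • z) z =
        ∑ j, inner ℝ z (b j) * fderiv ℝ w (x - τ • z) (b j) := by
      conv_lhs => enter [2]; rw [← b.sum_repr' z]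
      simp only [map_sum, map_smul, smul_eq_mul, real_inner_comm z]
    simp only [SchwartzMap.smulLeftCLM_apply_apply (hasTemperateGrowth_fderiv_apply hw _),
      map_smul, h_coord, Finset.smul_sum, Finset.sum_smul, smul_smul, smul_eq_mul, Finset.mul_sum]
    exact Finset.sum_congr rfl fun j _ ↦ by ring_nf
  have h_int (j) : Integrable fun z ↦ τ • (heatKernel z * inner ℝ z (b j)) •
      SchwartzMap.smulLeftCLM F (fun y ↦ fderiv ℝ w y (b j)) u (x - τ • z) :=
    (integrable_smul_schwartz_comp_sub (integrable_heatKernel_mul_inner (b j)) _ x τ).smul τ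
  simp only [h_expand]
  refine ⟨integrable_finsetSum _ fun j _ ↦ h_int j, ?_⟩
  simp only [divSmulGradient, sum_apply, Finset.smul_sum]
  rw [integral_finsetSum _ fun j _ ↦ h_int j, integral_finsetSum _ fun j _ ↦
    integrable_smul_schwartz_comp_sub integrable_heatKernel _ x τ, Finset.smul_sum]
  refine Finset.sum_congr rfl fun j _ ↦ ?_
  rw [integral_smul, integral_heatKernel_mul_inner_smul]
  module

/-- The part of the commutator of `w` with `besselSemigroup t` that comes from the Taylor remainder
of `w`. -/
def semigroupRemainder (w : E → ℝ) (u : E → F) (t : ℝ) (x : E) : F :=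
  rexp (-t) • ∫ z, heatKernel z • taylorRemainder w (x - √t • z) (√t • z) • u (x - √t • z)

lemma smul_besselSemigroup_sub_besselSemigroup_smul {w : E → ℝ} (hw : w.HasTemperateGrowth)
    (u : 𝓢(E, F)) {t : ℝ} (ht : 0 ≤ t) (x : E) :
    w x • besselSemigroup t u x - besselSemigroup t (SchwartzMap.smulLeftCLM F w u) x =
      (-(t / (2 * π ^ 2))) • besselSemigroup t (divSmulGradient w u) x +
        semigroupRemainder w u t x := by
  obtain ⟨h_int₁, h_eq₁⟩ := integral_heatKernel_smul_fderiv_smul hw u x √t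
  have h_int_u : Integrable fun z ↦ w x • heatKernel z • u (x - √t • z) :=
    (integrable_smul_schwartz_comp_sub integrable_heatKernel u x √t).smul (w x)
  have h_int_wu := integrable_smul_schwartz_comp_sub integrable_heatKernel
    (SchwartzMap.smulLeftCLM F w u) x √t
  have h_remainder (z : E) :
      heatKernel z • taylorRemainder w (x - √t • z) (√t • z) • u (x - √t • z) =
        w x • heatKernel z • u (x - √t • z) -
          heatKernel z • SchwartzMap.smulLeftCLM F w u (x - √t • z) -
          heatKernel z • fderiv ℝ w (x - √t • z) (√t • z) • u (x - √t • z) := by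
    rw [taylorRemainder, sub_add_cancel, SchwartzMap.smulLeftCLM_apply_apply hw]
    module
  simp only [semigroupRemainder, besselSemigroup, h_remainder]
  rw [integral_sub (h_int_u.sub' h_int_wu) h_int₁, integral_sub h_int_u h_int_wu, h_eq₁,
    integral_smul, Real.sq_sqrt ht]
  module

end SemigroupCommutator

section Minkowski

variable {α : Type*} [MeasurableSpace α] {ν : Measure α}

lemma lintegral_rpow_le_measure_univ_rpow_mul_lintegral_rpow {f : α → ℝ≥0∞}
    (hf : AEMeasurable f ν) {q : ℝ} (hq : 1 ≤ q) :
    (∫⁻ a, f a ∂ν) ^ q ≤ ν univ ^ (q - 1) * ∫⁻ a, f a ^ q ∂ν := by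
  have hq₀ : 0 < q := one_pos.trans_le hq
  have h_holder := eLpNorm'_le_eLpNorm'_mul_rpow_measure_univ one_pos hq hf.aestronglyMeasurable
  simp only [eLpNorm'_eq_lintegral_enorm, enorm_eq_self, ENNReal.rpow_one, div_one] at h_holder
  calc (∫⁻ a, f a ∂ν) ^ q
      ≤ ((∫⁻ a, f a ^ q ∂ν) ^ (1 / q) * ν univ ^ (1 - 1 / q)) ^ q :=
        ENNReal.rpow_le_rpow h_holder hq₀.le
    _ = ν univ ^ (q - 1) * ∫⁻ a, f a ^ q ∂ν := by
        rw [ENNReal.mul_rpow_of_nonneg _ _ hq₀.le, ← ENNReal.rpow_mul, ← ENNReal.rpow_mul, sub_mul,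
          one_div_mul_cancel hq₀.ne', ENNReal.rpow_one, one_mul, mul_comm]

lemma eLpNorm_le_measure_univ_mul_of_enorm_le_lintegral_translate {E G H : Type*} [AddGroup E]
    [MeasurableSpace E] [MeasurableAdd₂ E] [MeasurableNeg E] [NormedAddCommGroup G]
    [NormedAddCommGroup H] [SFinite ν] {μ : Measure E} [SFinite μ] [μ.IsAddRightInvariant]
    {p : ℝ≥0∞} (hp : 1 ≤ p) (hp_top : p ≠ ∞) {f : E → G} {h : E → H} (hh : StronglyMeasurable h)
    {g : α → E} (hg : Measurable g) (hf : ∀ x, ‖f x‖ₑ ≤ ∫⁻ a, ‖h (x - g a)‖ₑ ∂ν) :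
    eLpNorm f p μ ≤ ν univ * eLpNorm h p μ := by
  have hp₀ : p ≠ 0 := (one_pos.trans_le hp).ne'
  have hq : 1 ≤ p.toReal := by simpa using ENNReal.toReal_mono hp_top hp
  have hq₀ : 0 < p.toReal := one_pos.trans_le hq
  have h_meas : Measurable fun y : E × α ↦ ‖h (y.1 - g y.2)‖ₑ := hh.enorm.comp (by fun_prop)
  rw [← ENNReal.rpow_le_rpow_iff hq₀, ENNReal.mul_rpow_of_nonneg _ _ hq₀.le]
  simp only [eLpNorm_eq_lintegral_rpow_enorm_toReal hp₀ hp_top, ← ENNReal.rpow_mul,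
    one_div_mul_cancel hq₀.ne', ENNReal.rpow_one]
  calc ∫⁻ x, ‖f x‖ₑ ^ p.toReal ∂μ
      ≤ ∫⁻ x, ν univ ^ (p.toReal - 1) * ∫⁻ a, ‖h (x - g a)‖ₑ ^ p.toReal ∂ν ∂μ :=
        lintegral_mono fun x ↦ (ENNReal.rpow_le_rpow (hf x) hq₀.le).trans
          (lintegral_rpow_le_measure_univ_rpow_mul_lintegral_rpow
            (h_meas.comp measurable_prodMk_left).aemeasurable hq)
    _ = ν univ ^ (p.toReal - 1) * ∫⁻ a, ∫⁻ x, ‖h (x - g a)‖ₑ ^ p.toReal ∂μ ∂ν := by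
        rw [lintegral_const_mul _ (by fun_prop),
          lintegral_lintegral_swap (h_meas.pow_const _).aemeasurable]
    _ = (ν univ ^ (p.toReal - 1) * ν univ ^ (1 : ℝ)) * ∫⁻ x, ‖h x‖ₑ ^ p.toReal ∂μ := by
        simp only [lintegral_sub_right_eq_self (μ := μ) (fun x ↦ ‖h x‖ₑ ^ p.toReal),
          lintegral_const, ENNReal.rpow_one]
        ring
    _ = ν univ ^ p.toReal * ∫⁻ x, ‖h x‖ₑ ^ p.toReal ∂μ := by
        rw [← ENNReal.rpow_add_of_nonneg _ _ (sub_nonneg.2 hq) zero_le_one, sub_add_cancel]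

end Minkowski

section CommutatorRepresentation

variable {E F : Type*} [NormedAddCommGroup E] [InnerProductSpace ℝ E] [FiniteDimensional ℝ E]
  [MeasurableSpace E] [BorelSpace E] [NormedAddCommGroup F] [NormedSpace ℂ F]

/-- The commutator `[(1 - Δ) ^ s, w]` applied to a Schwartz function. -/
def besselPowerCommutator (s : ℝ) (w : E → ℝ) (u : 𝓢(E, F)) : 𝓢(E, F) :=
  besselPower s (SchwartzMap.smulLeftCLM F w u) - SchwartzMap.smulLeftCLM F w (besselPower s u)

lemma bernsteinConst_smul_besselPowerCommutator_apply [CompleteSpace F] {s : ℝ} (hs₀ : 0 < s)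
    (hs₁ : s < 1) {w : E → ℝ} (hw : w.HasTemperateGrowth) (u : 𝓢(E, F)) (x : E) :
    bernsteinConst s • besselPowerCommutator s w u x =
      (-(Real.Gamma (1 - s) / (2 * π ^ 2))) • besselPower (s - 1) (divSmulGradient w u) x +
        ∫ t in Ioi (0 : ℝ), t ^ (-s - 1) • semigroupRemainder w u t x := by
  obtain ⟨h_int_u, h_eq_u⟩ := integral_rpow_smul_sub_besselSemigroup hs₀ hs₁ u x
  obtain ⟨h_int_wu, h_eq_wu⟩ :=
    integral_rpow_smul_sub_besselSemigroup hs₀ hs₁ (SchwartzMap.smulLeftCLM F w u) x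
  obtain ⟨h_int_div, h_eq_div⟩ :=
    integral_rpow_smul_besselSemigroup hs₁ (divSmulGradient w u) x
  have h_remainder : EqOn (fun t : ℝ ↦ t ^ (-s - 1) • semigroupRemainder w u t x)
      (fun t ↦ t ^ (-s - 1) •
          (SchwartzMap.smulLeftCLM F w u x - besselSemigroup t (SchwartzMap.smulLeftCLM F w u) x) -
        w x • t ^ (-s - 1) • (u x - besselSemigroup t u x) +
        (2 * π ^ 2)⁻¹ • t ^ (-s) • besselSemigroup t (divSmulGradient w u) x) (Ioi 0) :=
    fun t (ht : 0 < t) ↦ by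
      have h_semigroup := smul_besselSemigroup_sub_besselSemigroup_smul hw u ht.le x
      have h_rpow : t ^ (-s) = t ^ (-s - 1) * t := by
        rw [← rpow_add_one ht.ne', sub_add_cancel]
      beta_reduce
      rw [← sub_eq_iff_eq_add'] at h_semigroup
      rw [← h_semigroup, h_rpow, SchwartzMap.smulLeftCLM_apply_apply hw]
      module
  rw [setIntegral_congr_fun measurableSet_Ioi h_remainder,
    integral_add (h_int_wu.sub' (h_int_u.fun_smul (w x))) (h_int_div.fun_smul _),
    integral_sub h_int_wu (h_int_u.fun_smul (w x)), integral_smul, integral_smul, h_eq_u,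
    h_eq_wu, h_eq_div, besselPowerCommutator, sub_apply, SchwartzMap.smulLeftCLM_apply_apply hw]
  module

end CommutatorRepresentation

section RemainderEstimate

variable {E F : Type*} [NormedAddCommGroup E] [InnerProductSpace ℝ E] [NormedAddCommGroup F]

/-- The integrable kernel in `(t, z)` that dominates the remainder of the commutator for a weight
whose Taylor remainder at `y` in direction `h` is at most `‖h‖ ^ 2 * (1 + ‖h‖ ^ 2) ^ N * |w y|`. -/
def remainderKernel (s : ℝ) (N : ℕ) (p : ℝ × E) : ℝ :=
  p.1 ^ (-s) * rexp (-p.1) * (1 + p.1) ^ N * (heatKernel p.2 * (1 + ‖p.2‖ ^ 2) ^ (N + 1))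

lemma norm_semigroupRemainder_integrand_le [NormedSpace ℝ F] {M : ℝ} (hM : 0 ≤ M) {N : ℕ}
    {w : E → ℝ}
    (hw : ∀ y h, |taylorRemainder w y h| ≤ M * (‖h‖ ^ 2 * (1 + ‖h‖ ^ 2) ^ N * |w y|))
    (s : ℝ) {t : ℝ} (ht : 0 < t) (y z : E) (v : F) :
    ‖t ^ (-s - 1) • rexp (-t) • heatKernel z • taylorRemainder w y (√t • z) • v‖ ≤
      M * remainderKernel s N (t, z) * ‖w y • v‖ := by
  have h_norm : ‖√t • z‖ ^ 2 = t * ‖z‖ ^ 2 := by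
    rw [norm_smul, mul_pow, Real.norm_of_nonneg (Real.sqrt_nonneg t), Real.sq_sqrt ht.le]
  have h_pow : t * ‖z‖ ^ 2 * (1 + t * ‖z‖ ^ 2) ^ N ≤
      t * ((1 + t) ^ N * (1 + ‖z‖ ^ 2) ^ (N + 1)) := by
    calc t * ‖z‖ ^ 2 * (1 + t * ‖z‖ ^ 2) ^ N
        ≤ t * (1 + ‖z‖ ^ 2) * ((1 + t) * (1 + ‖z‖ ^ 2)) ^ N := by
          gcongr
          · linarith
          · nlinarith [sq_nonneg ‖z‖]
      _ = _ := by rw [mul_pow]; ring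
  have h_rpow : t ^ (-s) = t ^ (-s - 1) * t := by rw [← rpow_add_one ht.ne', sub_add_cancel]
  have h_heat := heatKernel_nonneg z
  simp only [norm_smul, Real.norm_eq_abs, Real.abs_exp, abs_of_nonneg h_heat,
    abs_of_nonneg (rpow_nonneg ht.le _)]
  calc t ^ (-s - 1) * (rexp (-t) * (heatKernel z * (|taylorRemainder w y (√t • z)| * ‖v‖)))
      ≤ t ^ (-s - 1) * (rexp (-t) * (heatKernel z *
          (M * (t * ((1 + t) ^ N * (1 + ‖z‖ ^ 2) ^ (N + 1)) * |w y|) * ‖v‖))) := by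
        gcongr
        refine (hw y (√t • z)).trans ?_
        rw [h_norm]
        gcongr
    _ = M * remainderKernel s N (t, z) * (|w y| * ‖v‖) := by
        rw [remainderKernel, h_rpow]
        ring

variable [MeasurableSpace E] [BorelSpace E]

@[fun_prop]
lemma measurable_remainderKernel (s : ℝ) (N : ℕ) :
    Measurable (remainderKernel s N : ℝ × E → ℝ) := by
  have h_heat : Measurable (heatKernel : E → ℝ) := continuous_heatKernel.measurable
  unfold remainderKernel
  fun_prop

variable [FiniteDimensional ℝ E]

lemma integrable_remainderKernel {s : ℝ} (hs : s < 1) (N : ℕ) :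
    Integrable (remainderKernel s N : ℝ × E → ℝ) ((volume.restrict (Ioi 0)).prod volume) :=
  (integrableOn_rpow_neg_mul_exp_neg_mul_one_add_pow hs N).mul_prod
    (integrable_heatKernel_mul_one_add_norm_sq_pow (N + 1))

variable [NormedSpace ℂ F]

lemma enorm_integral_semigroupRemainder_le {M : ℝ} (hM : 0 ≤ M) {N : ℕ} {w : E → ℝ}
    (hw : ∀ y h, |taylorRemainder w y h| ≤ M * (‖h‖ ^ 2 * (1 + ‖h‖ ^ 2) ^ N * |w y|))
    (hw_cont : Continuous w) (s : ℝ) {u : E → F} (hu : Continuous u) (x : E) :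
    ‖∫ t in Ioi (0 : ℝ), t ^ (-s - 1) • semigroupRemainder w u t x‖ₑ ≤
      ∫⁻ p, ‖w (x - √p.1 • p.2) • u (x - √p.1 • p.2)‖ₑ
        ∂((volume.restrict (Ioi 0)).prod volume).withDensity
          fun p ↦ ENNReal.ofReal (M * remainderKernel s N p) := by
  have h_meas : Measurable fun p : ℝ × E ↦ ‖w (x - √p.1 • p.2) • u (x - √p.1 • p.2)‖ₑ :=
    (by fun_prop : Continuous fun p : ℝ × E ↦
      w (x - √p.1 • p.2) • u (x - √p.1 • p.2)).enorm.measurable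
  rw [lintegral_withDensity_eq_lintegral_mul _ (by fun_prop) h_meas,
    lintegral_prod _ (by fun_prop)]
  refine (enorm_integral_le_lintegral_enorm _).trans
    (setLIntegral_mono' measurableSet_Ioi fun t (ht : 0 < t) ↦ ?_)
  rw [semigroupRemainder, ← integral_smul, ← integral_smul]
  refine (enorm_integral_le_lintegral_enorm _).trans (lintegral_mono fun z ↦ ?_)
  rw [Pi.mul_apply, ← ofReal_norm, ← ofReal_norm, ← ENNReal.ofReal_mul' (norm_nonneg _)]
  exact ENNReal.ofReal_le_ofReal (norm_semigroupRemainder_integrand_le hM hw s ht _ z _)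

lemma exists_eLpNorm_integral_semigroupRemainder_le {w : E → ℝ} (hw : w.HasTemperateGrowth) {s : ℝ}
    (hs : s < 1) {M : ℝ} (hM : 0 ≤ M) {N : ℕ}
    (h_taylor : ∀ y h, |taylorRemainder w y h| ≤ M * (‖h‖ ^ 2 * (1 + ‖h‖ ^ 2) ^ N * |w y|))
    {p : ℝ≥0∞} (hp : 1 ≤ p) (hp_top : p ≠ ∞) :
    ∃ C : ℝ≥0, ∀ u : 𝓢(E, F),
      eLpNorm (fun x ↦ ∫ t in Ioi (0 : ℝ), t ^ (-s - 1) • semigroupRemainder w u t x) p volume ≤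
        C * eLpNorm (SchwartzMap.smulLeftCLM F w u) p volume := by
  have := isFiniteMeasure_withDensity_ofReal
    ((integrable_remainderKernel (E := E) hs N).const_mul M).2
  refine ⟨((((volume.restrict (Ioi 0)).prod volume).withDensity
    fun p : ℝ × E ↦ ENNReal.ofReal (M * remainderKernel s N p)) univ).toNNReal, fun u ↦ ?_⟩
  rw [ENNReal.coe_toNNReal (measure_ne_top _ univ)]
  refine eLpNorm_le_measure_univ_mul_of_enorm_le_lintegral_translate hp hp_top
    (SchwartzMap.smulLeftCLM F w u).continuous.stronglyMeasurable
    (g := fun p : ℝ × E ↦ √p.1 • p.2) (by fun_prop) fun x ↦ ?_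
  simp only [SchwartzMap.smulLeftCLM_apply_apply hw]
  exact enorm_integral_semigroupRemainder_le hM h_taylor hw.1.continuous s u.continuous x

end RemainderEstimate

section L2Estimates

lemma norm_toLp_le_mul_norm_toLp_of_norm_le {E F G : Type*} [NormedAddCommGroup E] [NormedSpace ℝ E]
    [MeasurableSpace E] [OpensMeasurableSpace E] [SecondCountableTopology E]
    [NormedAddCommGroup F] [NormedSpace ℝ F] [NormedAddCommGroup G] [NormedSpace ℝ G]
    {μ : Measure E} [μ.HasTemperateGrowth] (p : ℝ≥0∞) {φ : 𝓢(E, F)} {ψ : 𝓢(E, G)} {c : ℝ}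
    (h : ∀ x, ‖φ x‖ ≤ c * ‖ψ x‖) : ‖φ.toLp p μ‖ ≤ c * ‖ψ.toLp p μ‖ := by
  refine Lp.norm_le_mul_norm_of_ae_le_mul ?_
  filter_upwards [φ.coeFn_toLp p μ, ψ.coeFn_toLp p μ] with x h_left h_right
  rw [h_left, h_right]
  exact h x

lemma norm_toLp_le_mul_norm_toLp_of_eLpNorm_le {E F G : Type*} [NormedAddCommGroup E]
    [NormedSpace ℝ E] [MeasurableSpace E] [OpensMeasurableSpace E] [SecondCountableTopology E]
    [NormedAddCommGroup F] [NormedSpace ℝ F] [NormedAddCommGroup G] [NormedSpace ℝ G]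
    {μ : Measure E} [μ.HasTemperateGrowth] {p : ℝ≥0∞} {φ : 𝓢(E, F)} {ψ : 𝓢(E, G)} {C : ℝ≥0}
    (h : eLpNorm φ p μ ≤ C * eLpNorm ψ p μ) : ‖φ.toLp p μ‖ ≤ C * ‖ψ.toLp p μ‖ := by
  rw [SchwartzMap.norm_toLp, SchwartzMap.norm_toLp, ← ENNReal.coe_toReal C, ← ENNReal.toReal_mul]
  exact ENNReal.toReal_mono (ENNReal.mul_ne_top ENNReal.coe_ne_top (ψ.memLp p μ).eLpNorm_ne_top) h

variable {E F : Type*} [NormedAddCommGroup E] [InnerProductSpace ℝ E]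
  [FiniteDimensional ℝ E] [MeasurableSpace E] [BorelSpace E] [NormedAddCommGroup F]
  [InnerProductSpace ℂ F] [CompleteSpace F]

lemma norm_toLp_besselPower_lineDeriv_le {s : ℝ} (hs : s ≤ 1 / 2) (e : E) (φ : 𝓢(E, F)) :
    ‖(besselPower (s - 1) (∂_{e} φ)).toLp 2‖ ≤ 2 * π * ‖e‖ * ‖φ.toLp 2‖ := by
  have h_symbol : (fun ξ : E ↦ inner ℝ ξ e).HasTemperateGrowth := by fun_prop
  rw [← SchwartzMap.norm_fourier_toL2_eq, ← SchwartzMap.norm_fourier_toL2_eq φ, besselPower,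
    SchwartzMap.fourierMultiplierCLM_apply, FourierTransform.fourier_fourierInv_eq,
    SchwartzMap.fourier_lineDerivOp_eq]
  refine norm_toLp_le_mul_norm_toLp_of_norm_le 2 fun ξ ↦ ?_
  rw [SchwartzMap.smulLeftCLM_apply_apply (hasTemperateGrowth_bracketPow _), smul_apply,
    SchwartzMap.smulLeftCLM_apply_apply h_symbol]
  simp only [norm_smul, norm_mul, Complex.norm_ofNat, Complex.norm_real, Complex.norm_I, mul_one,
    Real.norm_eq_abs, abs_of_pos pi_pos, abs_of_pos (bracketPow_pos _ _)]
  calc bracketPow (s - 1) ξ * (2 * π * (|inner ℝ ξ e| * ‖𝓕 φ ξ‖))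
      = 2 * π * (|inner ℝ ξ e| * bracketPow (s - 1) ξ) * ‖𝓕 φ ξ‖ := by ring
    _ ≤ 2 * π * ‖e‖ * ‖𝓕 φ ξ‖ := by gcongr; exact abs_inner_mul_bracketPow_le hs ξ e

lemma norm_toLp_besselPower_divSmulGradient_le {w : E → ℝ} (hw : w.HasTemperateGrowth) {s : ℝ}
    (hs : s ≤ 1 / 2) {L : ℝ}
    (hL : ∀ y e, |fderiv ℝ w y e| ≤ L * ‖e‖ * |w y|) (u : 𝓢(E, F)) :
    ‖(besselPower (s - 1) (divSmulGradient w u)).toLp 2‖ ≤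
      finrank ℝ E * (2 * π * L) * ‖(SchwartzMap.smulLeftCLM F w u).toLp 2‖ := by
  set b := stdOrthonormalBasis ℝ E
  have h_term (j) : ‖(besselPower (s - 1) (∂_{b j}
      (SchwartzMap.smulLeftCLM F (fun y ↦ fderiv ℝ w y (b j)) u))).toLp 2‖ ≤
        2 * π * L * ‖(SchwartzMap.smulLeftCLM F w u).toLp 2‖ := by
    refine (norm_toLp_besselPower_lineDeriv_le hs (b j) _).trans ?_
    rw [b.norm_eq_one, mul_one, mul_assoc (2 * π)]
    gcongr
    refine norm_toLp_le_mul_norm_toLp_of_norm_le 2 fun y ↦ ?_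
    rw [SchwartzMap.smulLeftCLM_apply_apply (hasTemperateGrowth_fderiv_apply hw (b j)),
      SchwartzMap.smulLeftCLM_apply_apply hw, norm_smul, norm_smul, ← mul_assoc]
    gcongr
    simpa using hL y (b j)
  simp only [← SchwartzMap.toLpCLM_apply (𝕜 := ℝ)] at h_term ⊢
  rw [divSmulGradient, map_sum, map_sum]
  refine (norm_sum_le_of_le _ fun j _ ↦ h_term j).trans_eq ?_
  simp only [Finset.sum_const, Finset.card_univ, Fintype.card_fin, nsmul_eq_mul, mul_assoc]

lemma exists_norm_toLp_commutator_add_div_le {w : E → ℝ} (hw : w.HasTemperateGrowth) {s : ℝ}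
    (hs₀ : 0 < s) (hs₁ : s < 1) {M : ℝ} (hM : 0 ≤ M) {N : ℕ}
    (h_taylor : ∀ y h, |taylorRemainder w y h| ≤ M * (‖h‖ ^ 2 * (1 + ‖h‖ ^ 2) ^ N * |w y|)) :
    ∃ C : ℝ≥0, ∀ u : 𝓢(E, F),
      ‖(bernsteinConst s • besselPowerCommutator s w u +
          (Real.Gamma (1 - s) / (2 * π ^ 2)) •
            besselPower (s - 1) (divSmulGradient w u)).toLp 2‖ ≤
        C * ‖(SchwartzMap.smulLeftCLM F w u).toLp 2‖ := by
  obtain ⟨C, hC⟩ := exists_eLpNorm_integral_semigroupRemainder_le (F := F) hw hs₁ hM h_taylor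
    one_le_two ENNReal.ofNat_ne_top
  refine ⟨C, fun u ↦ ?_⟩
  have h_rep : ⇑(bernsteinConst s • besselPowerCommutator s w u +
      (Real.Gamma (1 - s) / (2 * π ^ 2)) • besselPower (s - 1) (divSmulGradient w u)) =
        fun x ↦ ∫ t in Ioi (0 : ℝ), t ^ (-s - 1) • semigroupRemainder w u t x := by
    ext x
    rw [add_apply, smul_apply, smul_apply,
      bernsteinConst_smul_besselPowerCommutator_apply hs₀ hs₁ hw, neg_smul, neg_add_cancel_comm]
  exact norm_toLp_le_mul_norm_toLp_of_eLpNorm_le (h_rep ▸ hC u)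

theorem exists_norm_toLp_besselPowerCommutator_le {w : E → ℝ} (hw : w.HasTemperateGrowth)
    {s : ℝ} (hs₀ : 0 < s) (hs : s ≤ 1 / 2) {L : ℝ}
    (h_grad : ∀ y e, |fderiv ℝ w y e| ≤ L * ‖e‖ * |w y|) {M : ℝ} (hM : 0 ≤ M) {N : ℕ}
    (h_taylor : ∀ y h, |taylorRemainder w y h| ≤ M * (‖h‖ ^ 2 * (1 + ‖h‖ ^ 2) ^ N * |w y|)) :
    ∃ C > 0, ∀ u : 𝓢(E, F), ‖(besselPowerCommutator s w u).toLp 2‖ ≤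
      C * ‖(SchwartzMap.smulLeftCLM F w u).toLp 2‖ := by
  have hs₁ : s < 1 := by linarith
  have h_const := bernsteinConst_pos hs₀ hs₁
  set c := Real.Gamma (1 - s) / (2 * π ^ 2)
  have hc : 0 ≤ c := div_nonneg (Real.Gamma_pos_of_pos (sub_pos.2 hs₁)).le (by positivity)
  obtain ⟨C, hC⟩ := exists_norm_toLp_commutator_add_div_le (F := F) hw hs₀ hs₁ hM h_taylor
  set C' := (bernsteinConst s)⁻¹ * (C + c * (finrank ℝ E * (2 * π * L)))
  refine ⟨max C' 1, by positivity, fun u ↦ ?_⟩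
  have h_div := norm_toLp_besselPower_divSmulGradient_le hw hs h_grad u
  have h_rem := hC u
  simp only [← SchwartzMap.toLpCLM_apply (𝕜 := ℝ)] at h_div h_rem ⊢
  rw [map_add, map_smul, map_smul] at h_rem
  refine le_trans ?_ (mul_le_mul_of_nonneg_right (le_max_left C' 1) (norm_nonneg _))
  rw [mul_assoc, le_inv_mul_iff₀ h_const, ← Real.norm_of_nonneg h_const.le, ← norm_smul]
  refine (norm_le_add_norm_add _ (c • SchwartzMap.toLpCLM ℝ F 2 volume
    (besselPower (s - 1) (divSmulGradient w u)))).trans ?_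
  rw [norm_smul c, Real.norm_of_nonneg hc, add_mul, mul_assoc c]
  exact add_le_add h_rem (mul_le_mul_of_nonneg_left h_div hc)

end L2Estimates

theorem commutator_bessel_weight_low_order_general {E F : Type*} [NormedAddCommGroup E]
    [InnerProductSpace ℝ E] [FiniteDimensional ℝ E] [MeasurableSpace E] [BorelSpace E]
    [NormedAddCommGroup F] [InnerProductSpace ℂ F] [CompleteSpace F] (r : ℝ) {s : ℝ} (hs₀ : 0 < s)
    (hs : s ≤ 1 / 2) :
    ∃ C > 0, ∀ u : 𝓢(E, F), ‖(besselPowerCommutator s (bracketPow r) u).toLp 2‖ ≤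
      C * ‖(SchwartzMap.smulLeftCLM F (bracketPow r) u).toLp 2‖ := by
  refine exists_norm_toLp_besselPowerCommutator_le (hasTemperateGrowth_bracketPow r) hs₀ hs
    (L := 2 * |r|) (M := 2 * |r| * (2 * |r - 1| + 1) * 2 ^ |r|) (N := ⌈|r|⌉₊)
    (fun y e ↦ ?_) (by positivity) fun y h ↦ ?_
  · rw [abs_of_pos (bracketPow_pos r y)]
    exact abs_fderiv_bracketPow_apply_le r y e
  · rw [abs_of_pos (bracketPow_pos r y)]
    refine (abs_bracketPow_add_sub_sub_fderiv_le r y h).trans ?_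
    gcongr
    · exact (bracketPow_pos r y).le
    · exact bracketPow_le_one_add_norm_sq_pow |r| h

lemma l2norm_coe_eq_norm_toLp (φ : 𝓢(V, ℂ)) : l2norm φ = ‖φ.toLp 2‖ := by
  rw [SchwartzMap.norm_toLp' two_ne_zero ENNReal.ofNat_ne_top]
  simp [l2norm]

lemma besselOp_two_mul_coe (s : ℝ) (φ : 𝓢(V, ℂ)) : besselOp (2 * s) φ = besselPower s φ := by
  ext v
  simp only [besselOp, besselPower_apply, bracketPow, Complex.real_smul, mul_div_cancel_left₀ s
    two_ne_zero, SchwartzMap.fourier_coe]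

lemma jb_rpow (m : ℝ) (v : V) : jb v ^ m = bracketPow (m / 2) v := by
  rw [jb, bracketPow, ← rpow_mul (by positivity), one_div_mul_eq_div]

lemma jb_rpow_mul_eq_smulLeftCLM (m : ℝ) (φ : 𝓢(V, ℂ)) :
    (fun v ↦ ((jb v ^ m : ℝ) : ℂ) * φ v) = SchwartzMap.smulLeftCLM ℂ (bracketPow (m / 2)) φ := by
  ext v
  rw [SchwartzMap.smulLeftCLM_apply_apply (hasTemperateGrowth_bracketPow _), jb_rpow,
    Complex.real_smul]

lemma besselOp_jb_rpow_commutator_eq (m s : ℝ) (u : 𝓢(V, ℂ)) :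
    (fun v ↦ besselOp (2 * s) (fun w ↦ ((jb w ^ m : ℝ) : ℂ) * u w) v -
      ((jb v ^ m : ℝ) : ℂ) * besselOp (2 * s) u v) =
        besselPowerCommutator s (bracketPow (m / 2)) u := by
  rw [jb_rpow_mul_eq_smulLeftCLM, besselOp_two_mul_coe, besselOp_two_mul_coe]
  exact congrArg (⇑(besselPower s _) - ·) (jb_rpow_mul_eq_smulLeftCLM m (besselPower s u))

/-- for `0 < s ≤ 1/2`,
`‖[(1-Δ)^s, ⟨·⟩^m] u‖_{L²} ≤ C ‖⟨·⟩^m u‖_{L²}` for Schwartz `u`. -/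
theorem commutator_bessel_weight_low_order (m s : ℝ) (hs0 : 0 < s) (hs : s ≤ 1/2) :
    ∃ C > 0, ∀ u : 𝓢(V, ℂ),
      l2norm (fun v =>
          besselOp (2*s) (fun w => ((jb w ^ m : ℝ) : ℂ) * u w) v
            - ((jb v ^ m : ℝ) : ℂ) * besselOp (2*s) (u : V → ℂ) v)
        ≤ C * l2norm (fun v => ((jb v ^ m : ℝ) : ℂ) * u v) := by
  simp_rw [besselOp_jb_rpow_commutator_eq, jb_rpow_mul_eq_smulLeftCLM, l2norm_coe_eq_norm_toLp]
  exact commutator_bessel_weight_low_order_general (m / 2) hs0 hs
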